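/- arXiv:2407.06588 — 3 statements merged into one kernel-verified Lean document; each statement's English description precedes it below -/
import Mathlib

section
/- Let (M, dist) be a metric space, f : M → M a map, and W₁, …, W_s ⊆ M fixed subsets. Let L > 0, let N be a positive integer, let s₀ be an integer with 3 ≤ s₀ ≤ s, and let d > 0. Then PT(L, 1, s₀, d) ⊆ PT(L, N+1, s₀, d) ∪ PT((s₀−1)L + (s₀−2)N, 1, s₀−1, d). -/
/-- A `d`-pseudotrajectory of `f`: a bi-infinite sequence `x` with
`dist (f (x k)) (x (k+1)) < d` for all `k`. -/
def IsPseudotrajectory {M : Type*} [MetricSpace M] (f : M → M) (d : ℝ) (x : ℤ → M) : Prop :=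
  ∀ k : ℤ, dist (f (x k)) (x (k + 1)) < d

/-- The class `PT(L, N, s₀, d)` of `d`-pseudotrajectories of `f` relative to the family of sets
`W₁, …, W_s`: those `d`-pseudotrajectories `x` for which there are `2 ≤ s̄ ≤ s₀`, indices
`j₁, …, j_{s̄}`, an integer `l` and times
`0 = τ(1) < t(2) ≤ τ(2) < t(3) ≤ ⋯ < t(s̄-1) ≤ τ(s̄-1) < t(s̄)` such that
`t(i+1) - τ(i) ≤ L`, `τ(i) - t(i) ≥ N`, the trajectory lies in `W_{j_i}` on
`[l + t(i), l + τ(i)]` for `2 ≤ i ≤ s̄ - 1`, in `W_{j₁}` on `(-∞, l]` and in `W_{j_{s̄}}` on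
`[l + t(s̄), ∞)`. -/
def PT {M : Type*} [MetricSpace M] (f : M → M) {s : ℕ} (W : Fin s → Set M)
    (L : ℝ) (N : ℕ) (s₀ : ℕ) (d : ℝ) : Set (ℤ → M) :=
  {x | IsPseudotrajectory f d x ∧
    ∃ sb : ℕ, 2 ≤ sb ∧ sb ≤ s₀ ∧
      ∃ (j : ℕ → Fin s) (l : ℤ) (t τ : ℕ → ℤ),
        τ 1 = 0 ∧
        (∀ i : ℕ, 1 ≤ i → i ≤ sb - 1 → τ i < t (i + 1)) ∧
        (∀ i : ℕ, 2 ≤ i → i ≤ sb - 1 → t i ≤ τ i) ∧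
        (∀ i : ℕ, 1 ≤ i → i ≤ sb - 1 → ((t (i + 1) - τ i : ℤ) : ℝ) ≤ L) ∧
        (∀ i : ℕ, 2 ≤ i → i ≤ sb - 1 → (N : ℤ) ≤ τ i - t i) ∧
        (∀ i : ℕ, 2 ≤ i → i ≤ sb - 1 →
          ∀ k : ℤ, l + t i ≤ k → k ≤ l + τ i → x k ∈ W (j i)) ∧
        (∀ k : ℤ, k ≤ l → x k ∈ W (j 1)) ∧
        (∀ k : ℤ, l + t sb ≤ k → x k ∈ W (j sb))}

/-- For `L > 0`, a positive integer `N`, `3 ≤ s₀ ≤ s` and `d > 0`, one has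
`PT(L, 1, s₀, d) ⊆ PT(L, N+1, s₀, d) ∪ PT((s₀-1)L + (s₀-2)N, 1, s₀-1, d)`. -/
theorem pt_subset_union {M : Type*} [MetricSpace M] (f : M → M) {s : ℕ} (W : Fin s → Set M)
    (L : ℝ) (hL : 0 < L) (N : ℕ) (hN : 0 < N) (s₀ : ℕ) (hs₀ : 3 ≤ s₀) (hs₀s : s₀ ≤ s)
    (d : ℝ) (hd : 0 < d) :
    PT f W L 1 s₀ d ⊆
      PT f W L (N + 1) s₀ d ∪
        PT f W (((s₀ - 1 : ℕ) : ℝ) * L + ((s₀ - 2 : ℕ) : ℝ) * (N : ℝ)) 1 (s₀ - 1) d := by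
  rintro x ⟨hx, sb, h2, hsb, j, l, t, τ, h1, hlt, hle, hgap, hlen, hW, hW1, hWs⟩
  by_cases hall : ∀ i : ℕ, 2 ≤ i → i ≤ sb - 1 → ((N + 1 : ℕ) : ℤ) ≤ τ i - t i
  · exact Or.inl ⟨hx, sb, h2, hsb, j, l, t, τ, h1, hlt, hle, hgap, hall, hW, hW1, hWs⟩
  right
  push Not at hall
  obtain ⟨p, hp2, hps, hpN⟩ := hall
  have ha : (2 : ℝ) ≤ ((s₀ - 1 : ℕ) : ℝ) := by
    exact_mod_cast (by omega : 2 ≤ s₀ - 1)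
  have hb : (1 : ℝ) ≤ ((s₀ - 2 : ℕ) : ℝ) := by
    exact_mod_cast (by omega : 1 ≤ s₀ - 2)
  have hN0 : (0 : ℝ) ≤ (N : ℝ) := Nat.cast_nonneg N
  have hbig : 2 * L + N ≤ ((s₀ - 1 : ℕ) : ℝ) * L + ((s₀ - 2 : ℕ) : ℝ) * (N : ℝ) := by
    nlinarith
  refine ⟨hx, sb - 1, by omega, by omega, fun k => if k < p then j k else j (k + 1), l,
    fun k => if k < p then t k else t (k + 1), fun k => if k < p then τ k else τ (k + 1),
    ?_, ?_, ?_, ?_, ?_, ?_, ?_, ?_⟩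
  · simp only [if_pos (show 1 < p by omega), h1]
  · intro i hi1 hi2
    rcases lt_trichotomy (i + 1) p with h | h | h
    · simp only [if_pos h, if_pos (show i < p by omega)]
      exact hlt i hi1 (by omega)
    · simp only [if_neg (show ¬ i + 1 < p by omega), if_pos (show i < p by omega)]
      have e1 := hlt i hi1 (by omega)
      have e2 := hlt (i + 1) (by omega) (by omega)
      have e3 := hle (i + 1) (by omega) (by omega)
      omega
    · simp only [if_neg (show ¬ i + 1 < p by omega), if_neg (show ¬ i < p by omega)]
      exact hlt (i + 1) (by omega) (by omega)
  · intro i hi1 hi2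
    by_cases h : i < p
    · simp only [if_pos h]
      exact hle i hi1 (by omega)
    · simp only [if_neg h]
      exact hle (i + 1) (by omega) (by omega)
  · intro i hi1 hi2
    rcases lt_trichotomy (i + 1) p with h | h | h
    · simp only [if_pos h, if_pos (show i < p by omega)]
      have := hgap i hi1 (by omega)
      linarith
    · simp only [if_neg (show ¬ i + 1 < p by omega), if_pos (show i < p by omega)]
      have e1 := hgap i hi1 (by omega)
      have e2 := hgap (i + 1) (by omega) (by omega)
      subst h
      have e3 : τ (i + 1) - t (i + 1) ≤ (N : ℤ) := by push_cast at hpN; omega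
      have e4 : ((τ (i + 1) - t (i + 1) : ℤ) : ℝ) ≤ (N : ℝ) := by exact_mod_cast e3
      push_cast at e1 e2 e4 ⊢
      linarith
    · simp only [if_neg (show ¬ i + 1 < p by omega), if_neg (show ¬ i < p by omega)]
      have := hgap (i + 1) (by omega) (by omega)
      linarith
  · intro i hi1 hi2
    by_cases h : i < p
    · simp only [if_pos h]
      exact hlen i hi1 (by omega)
    · simp only [if_neg h]
      exact hlen (i + 1) (by omega) (by omega)
  · intro i hi1 hi2
    by_cases h : i < p
    · simp only [if_pos h]
      exact hW i hi1 (by omega)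
    · simp only [if_neg h]
      exact hW (i + 1) (by omega) (by omega)
  · simp only [if_pos (show 1 < p by omega)]
    exact hW1
  · simp only [if_neg (show ¬ sb - 1 < p by omega), show sb - 1 + 1 = sb by omega]
    exact hWs
end

section
/- Let m ≥ 1 and u ≥ 1 be integers. Let A be a topological space, U ⊆ ℝᵘ an open set, and h₁ : A → ℝᵐ, h₂ : U → ℝᵐ continuous maps (ℝᵐ carrying the Euclidean metric), with h₁(A) ⊆ ℝ^{m−1} × {0}. Suppose v₀ ∈ U and a ∈ A satisfy h₁(a) = h₂(v₀), and suppose h₁ and h₂ are C⁰ transverse at the pair (a, v₀). Then for every neighborhood U' ⊆ U of v₀ there exist v₁, v₂ ∈ U' such that the m-th coordinate of h₂(v₁) is strictly positive and the m-th coordinate of h₂(v₂) is strictly negative. -/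
/-- The intersection `h₁(C) ∩ h₂(D)` is `δ`-essential: for all continuous maps `h₁'`, `h₂'`
within uniform `C⁰` distance `δ` of `h₁`, `h₂` respectively, the images `h₁'(C)` and `h₂'(D)`
still intersect. -/
def DeltaEssential {A B M : Type*} [TopologicalSpace A] [TopologicalSpace B] [MetricSpace M]
    (h₁ : C(A, M)) (h₂ : C(B, M)) (Cs : Set A) (Ds : Set B) (δ : ℝ) : Prop :=
  ∀ (h₁' : C(A, M)) (h₂' : C(B, M)),
    (∀ x : A, dist (h₁ x) (h₁' x) ≤ δ) → (∀ y : B, dist (h₂ y) (h₂' y) ≤ δ) →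
    (h₁' '' Cs ∩ h₂' '' Ds).Nonempty

/-- `h₁` and `h₂` are `C⁰` transverse at the pair `(a, b)`: for all neighborhoods `Ua` of `a`
and `Ub` of `b` there is `δ > 0` such that the intersection `h₁(Ua) ∩ h₂(Ub)` is
`δ`-essential. -/
def C0TransverseAt {A B M : Type*} [TopologicalSpace A] [TopologicalSpace B] [MetricSpace M]
    (h₁ : C(A, M)) (h₂ : C(B, M)) (a : A) (b : B) : Prop :=
  ∀ Ua ∈ nhds a, ∀ Ub ∈ nhds b, ∃ δ > (0 : ℝ), DeltaEssential h₁ h₂ Ua Ub δ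

/-- The last coordinate index of `Fin m` for `m ≥ 1`. -/
def lastIndex (m : ℕ) (hm : 1 ≤ m) : Fin m := ⟨m - 1, by omega⟩

/-- Let `m, u ≥ 1`, `A` a topological space, `U ⊆ ℝᵘ` open, `h₁ : A → ℝᵐ` and
`h₂ : U → ℝᵐ` continuous with `h₁(A) ⊆ ℝ^{m-1} × {0}`.  If `h₁(a) = h₂(v₀)` and `h₁`, `h₂` are
`C⁰` transverse at `(a, v₀)`, then every neighborhood of `v₀` in `U` contains points `v₁`, `v₂`
with `(h₂ v₁)ₘ > 0` and `(h₂ v₂)ₘ < 0`. -/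
theorem c0Transverse_sign_change (m u : ℕ) (hm : 1 ≤ m) (hu : 1 ≤ u)
    (A : Type*) [TopologicalSpace A]
    (U : Set (EuclideanSpace ℝ (Fin u))) (hU : IsOpen U)
    (h₁ : C(A, EuclideanSpace ℝ (Fin m))) (h₂ : C(U, EuclideanSpace ℝ (Fin m)))
    (hh₁ : ∀ a : A, h₁ a (lastIndex m hm) = 0)
    (a : A) (v₀ : U) (hav : h₁ a = h₂ v₀)
    (htrans : C0TransverseAt h₁ h₂ a v₀) :
    ∀ U' ∈ nhds v₀, ∃ v₁ ∈ U', ∃ v₂ ∈ U',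
      0 < h₂ v₁ (lastIndex m hm) ∧ h₂ v₂ (lastIndex m hm) < 0 := by
  intro U' hU'
  obtain ⟨δ, hδ, hess⟩ := htrans Set.univ Filter.univ_mem U' hU'
  have key : ∀ c : ℝ, |c| ≤ δ → ∃ v ∈ U', h₂ v (lastIndex m hm) + c = 0 := by
    intro c hc
    obtain ⟨p, ⟨x, _, hx⟩, ⟨v, hv, hvp⟩⟩ := hess h₁
      (h₂ + ContinuousMap.const _ (EuclideanSpace.single (lastIndex m hm) c))
      (fun x => by simpa using hδ.le) (fun y => by simpa [dist_eq_norm] using hc)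
    refine ⟨v, hv, ?_⟩
    have h := hh₁ x
    rw [hx, ← hvp] at h
    simpa using h
  obtain ⟨v₁, hv₁, e₁⟩ := key (-δ) (by rw [abs_neg, abs_of_pos hδ])
  obtain ⟨v₂, hv₂, e₂⟩ := key δ (by rw [abs_of_pos hδ])
  exact ⟨v₁, hv₁, v₂, hv₂, by linarith, by linarith⟩
end

section
/- Let m ≥ 1 and u ≥ 1 be integers. Let A be a topological space, U ⊆ ℝᵘ an open neighborhood of 0, h₁ : A → ℝᵐ continuous with h₁(A) = (−1,1)^{m−1} × {0}, and h₂ : U → ℝᵐ continuous with h₂(U) ⊆ (−1,1)ᵐ (ℝᵐ carrying the Euclidean metric). Suppose the m-th coordinate of h₂(0) equals 0, and suppose h₁ and h₂ are C⁰ transverse at every pair (a, b) ∈ A × U with h₁(a) = h₂(b). Then there exist v₁, v₂ ∈ U such that the m-th coordinate of h₂(v₁) is strictly positive, the m-th coordinate of h₂(v₂) is strictly negative, and v₁ ∉ {t·v₂ : t ≥ 0}. -/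
/-- The open cube `(-1, 1)ᵐ` in `ℝᵐ`. -/
def openCube (m : ℕ) : Set (EuclideanSpace ℝ (Fin m)) :=
  {y | ∀ i : Fin m, y i ∈ Set.Ioo (-1 : ℝ) 1}

/-- The slice `(-1, 1)^{m-1} × {0}` in `ℝᵐ`: the first `m - 1` coordinates lie in `(-1, 1)` and
the last coordinate is `0`. -/
def openSlice (m : ℕ) : Set (EuclideanSpace ℝ (Fin m)) :=
  {y | ∀ i : Fin m, ((i : ℕ) + 1 < m → y i ∈ Set.Ioo (-1 : ℝ) 1) ∧
    ((i : ℕ) + 1 = m → y i = 0)}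

theorem sign_aux (m u : ℕ) (hm : 1 ≤ m)
    (A : Type*) [TopologicalSpace A]
    (U : Set (EuclideanSpace ℝ (Fin u)))
    (h₁ : C(A, EuclideanSpace ℝ (Fin m))) (h₂ : C(U, EuclideanSpace ℝ (Fin m)))
    (hh₁ : Set.range h₁ = openSlice m)
    (hh₂ : ∀ v : U, h₂ v ∈ openCube m)
    (htrans : ∀ (a : A) (b : U), h₁ a = h₂ b → C0TransverseAt h₁ h₂ a b)
    (b : U) (hb : h₂ b (lastIndex m hm) = 0) (Ub : Set U) (hUb : Ub ∈ nhds b)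
    (s : ℝ) (hs : |s| = 1) : ∃ v ∈ Ub, 0 < s * h₂ v (lastIndex m hm) := by
  have hmem : h₂ b ∈ openSlice m := by
    intro i
    refine ⟨fun _ => hh₂ b i, fun hi => ?_⟩
    have : i = lastIndex m hm := by
      apply Fin.ext
      simp only [lastIndex]
      omega
    rw [this, hb]
  rw [← hh₁] at hmem
  obtain ⟨a, ha⟩ := hmem
  obtain ⟨δ, hδ, H⟩ := htrans a b ha Set.univ Filter.univ_mem Ub hUb
  let w : EuclideanSpace ℝ (Fin m) := EuclideanSpace.single (lastIndex m hm) (-s * δ)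
  have hw : ‖w‖ = δ := by
    simp [w, abs_mul, hs, abs_of_pos hδ]
  obtain ⟨y, ⟨x, -, hx⟩, ⟨v, hv, hvy⟩⟩ := H h₁ ⟨fun y => h₂ y + w, by fun_prop⟩
    (fun x => by simp [hδ.le]) (fun y => by simp [dist_eq_norm, hw])
  refine ⟨v, hv, ?_⟩
  have hy : y (lastIndex m hm) = 0 := by
    have h3 : h₁ x ∈ openSlice m := hh₁ ▸ Set.mem_range_self x
    rw [← hx]
    exact (h3 (lastIndex m hm)).2 (by simp only [lastIndex]; omega)
  have h4 : h₂ v (lastIndex m hm) + (-s * δ) = 0 := by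
    rw [← hy, ← hvy]
    simp [w]
  have hs2 : s * s = 1 := by rw [← abs_mul_abs_self, hs]; norm_num
  have : h₂ v (lastIndex m hm) = s * δ := by linarith
  rw [this, ← mul_assoc, hs2]
  linarith

/-- Let `m, u ≥ 1`, `U ⊆ ℝᵘ` an open neighborhood of `0`,
`h₁ : A → ℝᵐ` continuous with image `(-1,1)^{m-1} × {0}`, and `h₂ : U → ℝᵐ` continuous with
image in `(-1,1)ᵐ`.  If the `m`-th coordinate of `h₂(0)` is `0` and `h₁`, `h₂` are `C⁰`
transverse at every pair `(a, b)` with `h₁ a = h₂ b`, then there are `v₁, v₂ ∈ U` with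
`(h₂ v₁)ₘ > 0`, `(h₂ v₂)ₘ < 0` and `v₁ ∉ {t • v₂ : t ≥ 0}`. -/
theorem c0Transverse_sign_change_nonradial (m u : ℕ) (hm : 1 ≤ m) (hu : 1 ≤ u)
    (A : Type*) [TopologicalSpace A]
    (U : Set (EuclideanSpace ℝ (Fin u))) (hU : IsOpen U) (hU0 : 0 ∈ U)
    (h₁ : C(A, EuclideanSpace ℝ (Fin m))) (h₂ : C(U, EuclideanSpace ℝ (Fin m)))
    (hh₁ : Set.range h₁ = openSlice m)
    (hh₂ : ∀ v : U, h₂ v ∈ openCube m)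
    (hz : h₂ ⟨0, hU0⟩ (lastIndex m hm) = 0)
    (htrans : ∀ (a : A) (b : U), h₁ a = h₂ b → C0TransverseAt h₁ h₂ a b) :
    ∃ v₁ v₂ : U, 0 < h₂ v₁ (lastIndex m hm) ∧ h₂ v₂ (lastIndex m hm) < 0 ∧
      ∀ t : ℝ, 0 ≤ t → (v₁ : EuclideanSpace ℝ (Fin u)) ≠ t • (v₂ : EuclideanSpace ℝ (Fin u)) := by
  by_contra hcon
  push Not at hcon
  have key := sign_aux m u hm A U h₁ h₂ hh₁ hh₂ htrans
  obtain ⟨p, -, hp⟩ := key ⟨0, hU0⟩ hz Set.univ Filter.univ_mem 1 (by norm_num)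
  obtain ⟨n, -, hn⟩ := key ⟨0, hU0⟩ hz Set.univ Filter.univ_mem (-1) (by norm_num)
  rw [one_mul] at hp
  have hn : h₂ n (lastIndex m hm) < 0 := by linarith
  have hn0 : (n : EuclideanSpace ℝ (Fin u)) ≠ 0 := by
    intro h
    have : n = ⟨0, hU0⟩ := Subtype.ext h
    rw [this, hz] at hn
    exact lt_irrefl _ hn
  have hp0 : (p : EuclideanSpace ℝ (Fin u)) ≠ 0 := by
    intro h
    have : p = ⟨0, hU0⟩ := Subtype.ext h
    rw [this, hz] at hp
    exact lt_irrefl _ hp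
  have hnn : 0 < inner ℝ (n : EuclideanSpace ℝ (Fin u)) (n : EuclideanSpace ℝ (Fin u)) :=
    real_inner_self_pos.2 hn0
  have hpp : 0 < inner ℝ (p : EuclideanSpace ℝ (Fin u)) (p : EuclideanSpace ℝ (Fin u)) :=
    real_inner_self_pos.2 hp0
  -- a point of `U` on the opposite ray
  have hcont : Filter.Tendsto (fun ε : ℝ => (-ε) • (n : EuclideanSpace ℝ (Fin u)))
      (nhdsWithin 0 (Set.Ioi 0)) (nhds 0) := by
    have : Continuous (fun ε : ℝ => (-ε) • (n : EuclideanSpace ℝ (Fin u))) := by fun_prop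
    have h := this.tendsto 0
    simp only [neg_zero, zero_smul] at h
    exact h.mono_left nhdsWithin_le_nhds
  obtain ⟨ε, hεU, hε⟩ := ((hcont.eventually (hU.mem_nhds hU0)).and
    self_mem_nhdsWithin).exists
  have hε : 0 < ε := hε
  let b : U := ⟨(-ε) • (n : EuclideanSpace ℝ (Fin u)), hεU⟩
  have hbn : inner ℝ (b : EuclideanSpace ℝ (Fin u)) (n : EuclideanSpace ℝ (Fin u)) < 0 := by
    simp only [b, inner_smul_left]
    simpa using mul_pos hε hnn
  have hnopos : ∀ v : U, inner ℝ (v : EuclideanSpace ℝ (Fin u))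
      (n : EuclideanSpace ℝ (Fin u)) < 0 → ¬ 0 < h₂ v (lastIndex m hm) := by
    intro v hv hv0
    obtain ⟨t, ht, he⟩ := hcon v n hv0 hn
    rw [he, real_inner_smul_left] at hv
    nlinarith [mul_nonneg ht hnn.le]
  have hb : h₂ b (lastIndex m hm) = 0 := by
    rcases lt_trichotomy (h₂ b (lastIndex m hm)) 0 with h | h | h
    · exfalso
      obtain ⟨t, ht, he⟩ := hcon p b hp h
      obtain ⟨s, hs, he'⟩ := hcon p n hp hn
      have h1 : inner ℝ (p : EuclideanSpace ℝ (Fin u)) (p : EuclideanSpace ℝ (Fin u))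
          = t * (s * inner ℝ (b : EuclideanSpace ℝ (Fin u)) (n : EuclideanSpace ℝ (Fin u))) := by
        rw [← real_inner_smul_right, ← real_inner_smul_left, ← he, ← he']
      have := mul_nonneg ht (mul_nonneg hs (neg_nonneg.2 hbn.le))
      nlinarith
    · exact h
    · exact absurd h (hnopos b hbn)
  obtain ⟨v, hv, hv0⟩ := key b hb
    {v : U | inner ℝ (v : EuclideanSpace ℝ (Fin u)) (n : EuclideanSpace ℝ (Fin u)) < 0}
    ((isOpen_lt (by fun_prop) continuous_const).mem_nhds hbn) 1 (by norm_num)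
  rw [one_mul] at hv0
  exact hnopos v hv hv0
end
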